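/- Every reduced Gröbner basis G of the ideal ⟨𝓕⟩ ⊆ Z2[X] with respect to the weighted order ≼_w satisfies |G| ≥ 2^(2^n) and moreover |{p ∈ G : deg(p) ≥ 2^(2^n)}| ≥ 2^(2^n), where deg(p) denotes the maximal total degree of a monomial occurring in p. -/

import Mathlib

open MvPolynomial

/-- Monomials in the variables `σ`, represented by their exponent vectors. -/
abbrev Mon (σ : Type*) := σ →₀ ℕ

/-- A monomial order: a total order on monomials such that `1 ≼ t` for every monomial `t`
and `t ≼ u → t·v ≼ u·v` (written additively on exponent vectors). -/
structure MonOrd (σ : Type*) where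
  le : Mon σ → Mon σ → Prop
  le_refl : ∀ t, le t t
  le_trans : ∀ t u v, le t u → le u v → le t v
  le_antisymm : ∀ t u, le t u → le u t → t = u
  le_total : ∀ t u, le t u ∨ le u t
  zero_le : ∀ t, le 0 t
  add_le_add : ∀ t u v, le t u → le (t + v) (u + v)

/-- Strict version of a monomial order. -/
def MonOrd.lt {σ : Type*} (μ : MonOrd σ) (t u : Mon σ) : Prop := μ.le t u ∧ t ≠ u

/-- The extension of a monomial order (given by the relation `r` on monomials) to polynomials:
`g ≼ f` iff `g = f` or the greatest monomial on which `f` and `g` differ occurs in `f`.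
(This is the closed form of the recursive definition: `g ≼ f` iff `g = f`, or
`HT g ≺ HT f`, or `HT g = HT f` and `g - HT g ≼ f - HT f`, with `0` the least polynomial.) -/
def polyLe {σ : Type*} (r : Mon σ → Mon σ → Prop) (g f : MvPolynomial σ (ZMod 2)) : Prop :=
  g = f ∨ ∃ t, t ∈ f.support ∧ t ∉ g.support ∧
    ∀ u : Mon σ, ((u ∈ f.support ∧ u ∉ g.support) ∨ (u ∈ g.support ∧ u ∉ f.support)) → r u t

/-- Strict extension of a monomial order to polynomials. -/
def polyLt {σ : Type*} (r : Mon σ → Mon σ → Prop) (g f : MvPolynomial σ (ZMod 2)) : Prop :=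
  polyLe r g f ∧ g ≠ f

/-- `S_F`: the set of non-residual polynomials with respect to `F` and the monomial order `r`,
i.e. those `f` admitting a `g` with `f + g ∈ ⟨F⟩` and `g ≺ f`. -/
def SF {σ : Type*} (r : Mon σ → Mon σ → Prop) (F : Set (MvPolynomial σ (ZMod 2))) :
    Set (MvPolynomial σ (ZMod 2)) :=
  {f | ∃ g, f + g ∈ Ideal.span F ∧ polyLt r g f}

/-- `t` is the head monomial (`r`-greatest monomial) of the polynomial `f`. -/
def IsHT {σ : Type*} (r : Mon σ → Mon σ → Prop) (f : MvPolynomial σ (ZMod 2)) (t : Mon σ) :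
    Prop :=
  t ∈ f.support ∧ ∀ u ∈ f.support, r u t

/-- `HT(S)`: the set of head monomials (as polynomials) of the nonzero elements of `S`. -/
def HTset {σ : Type*} (r : Mon σ → Mon σ → Prop) (S : Set (MvPolynomial σ (ZMod 2))) :
    Set (MvPolynomial σ (ZMod 2)) :=
  {p | ∃ f ∈ S, f ≠ 0 ∧ ∃ t, IsHT r f t ∧ p = monomial t 1}

/-- The divisibility (componentwise) order `◁` on monomials. -/
def triMon {σ : Type*} (t u : Mon σ) : Prop := ∀ x, t x ≤ u x

/-- The order `◁` on polynomials: `p ◁ q` iff there is an injective map `φ` from the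
monomials of `p` to the monomials of `q` with `t ◁ φ t` for each monomial `t` of `p`. -/
def triPoly {σ : Type*} (p q : MvPolynomial σ (ZMod 2)) : Prop :=
  ∃ φ : Mon σ → Mon σ, Set.InjOn φ ↑p.support ∧ ∀ t ∈ p.support, φ t ∈ q.support ∧ triMon t (φ t)

/-- Upward closure with respect to `◁`. -/
def upClo {σ : Type*} (A : Set (MvPolynomial σ (ZMod 2))) : Set (MvPolynomial σ (ZMod 2)) :=
  {q | ∃ p ∈ A, triPoly p q}

/-- `Min_◁(A)`: the `◁`-minimal elements of `A`. -/
def minTri {σ : Type*} (A : Set (MvPolynomial σ (ZMod 2))) : Set (MvPolynomial σ (ZMod 2)) :=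
  {p | p ∈ A ∧ ∀ q ∈ A, triPoly q p → q = p}

/-- `G` is a Gröbner basis of the ideal `I` with respect to the monomial order `r`. -/
def IsGB {σ : Type*} (r : Mon σ → Mon σ → Prop) (G : Finset (MvPolynomial σ (ZMod 2)))
    (I : Ideal (MvPolynomial σ (ZMod 2))) : Prop :=
  (↑G : Set (MvPolynomial σ (ZMod 2))) ⊆ ↑I ∧
    Ideal.span (↑G : Set (MvPolynomial σ (ZMod 2))) = I ∧
    Ideal.span (HTset r (↑I : Set (MvPolynomial σ (ZMod 2)))) = Ideal.span (HTset r ↑G)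

/-- `G` is a reduced Gröbner basis of `I` with respect to `r`. -/
def IsReducedGB {σ : Type*} (r : Mon σ → Mon σ → Prop) (G : Finset (MvPolynomial σ (ZMod 2)))
    (I : Ideal (MvPolynomial σ (ZMod 2))) : Prop :=
  IsGB r G I ∧ ∀ f ∈ G, ¬ ∀ t ∈ f.support,
    (monomial t 1 : MvPolynomial σ (ZMod 2)) ∈
      Ideal.span (HTset r ((↑G : Set (MvPolynomial σ (ZMod 2))) \ {f}))

/-- The variable set `X`: the special variables `s, ℓ, c, c̄, b, b̄` together with, for each
`0 ≤ i ≤ n`, the variables `s_i, f_i, q_{ji}, c_{ji}, b_{ji}` (`1 ≤ j ≤ 4`, encoded by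
`j : Fin 4`) and their barred copies (`bar = true`). -/
inductive MVar (n : ℕ) : Type where
  | vs | vl | vc | vcb | vb | vbb
  | vS (bar : Bool) (i : Fin (n+1))
  | vF (bar : Bool) (i : Fin (n+1))
  | vQ (bar : Bool) (j : Fin 4) (i : Fin (n+1))
  | vC (bar : Bool) (j : Fin 4) (i : Fin (n+1))
  | vB (bar : Bool) (j : Fin 4) (i : Fin (n+1))
deriving DecidableEq

open MVar

abbrev MPoly (n : ℕ) := MvPolynomial (MVar n) (ZMod 2)

/-- `e(n) = 2^(2^n)`. -/
def en (n : ℕ) : ℕ := 2 ^ 2 ^ n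

/-- The set `P_0` (barred copy if `bar = true`). -/
def P0 (n : ℕ) (bar : Bool) : Set (MPoly n) :=
  {p | ∃ j : Fin 4, p =
    X (vB bar j 0) ^ 2 * X (vC bar j 0) * X (vF bar 0) + X (vC bar j 0) * X (vS bar 0)}

/-- The set `P_m` for `m = i+1`, `i : Fin n` (barred copy if `bar = true`).
Here `i.succ` plays the role of `m` and `i.castSucc` the role of `m-1`; the indices
`1,2,3,4` of the paper are encoded as `0,1,2,3 : Fin 4`. -/
def Pm (n : ℕ) (bar : Bool) (i : Fin n) : Set (MPoly n) :=
  ({ X (vQ bar 0 i.succ) * X (vC bar 0 i.castSucc) * X (vS bar i.castSucc) + X (vS bar i.succ),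
    X (vQ bar 1 i.succ) * X (vC bar 1 i.castSucc) * X (vS bar i.castSucc)
      + X (vQ bar 0 i.succ) * X (vB bar 0 i.castSucc) * X (vC bar 0 i.castSucc)
        * X (vF bar i.castSucc),
    X (vQ bar 2 i.succ) * X (vC bar 2 i.castSucc) * X (vF bar i.castSucc)
      + X (vQ bar 1 i.succ) * X (vC bar 1 i.castSucc) * X (vF bar i.castSucc),
    X (vQ bar 2 i.succ) * X (vB bar 0 i.castSucc) * X (vC bar 2 i.castSucc)
        * X (vS bar i.castSucc)
      + X (vQ bar 1 i.succ) * X (vB bar 3 i.castSucc) * X (vC bar 1 i.castSucc)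
        * X (vS bar i.castSucc),
    X (vQ bar 3 i.succ) * X (vB bar 3 i.castSucc) * X (vC bar 3 i.castSucc)
        * X (vF bar i.castSucc)
      + X (vQ bar 2 i.succ) * X (vC bar 2 i.castSucc) * X (vS bar i.castSucc),
    X (vQ bar 3 i.succ) * X (vC bar 3 i.castSucc) * X (vS bar i.castSucc)
      + X (vF bar i.succ) } : Set (MPoly n))
  ∪ {p | ∃ j : Fin 4, p =
      X (vQ bar 1 i.succ) * X (vB bar 2 i.castSucc) * X (vB bar j i.succ) * X (vC bar j i.succ)
          * X (vF bar i.castSucc)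
        + X (vQ bar 1 i.succ) * X (vB bar 1 i.castSucc) * X (vC bar j i.succ)
          * X (vF bar i.castSucc)}

/-- The set `P = P_0 ∪ P_1 ∪ ⋯ ∪ P_n`; for `bar = true` this is the barred copy `P̄`
(the image of `P` under the substitution replacing each variable by its barred version). -/
def PP (n : ℕ) (bar : Bool) : Set (MPoly n) := P0 n bar ∪ ⋃ i : Fin n, Pm n bar i

/-- The set `G` of seven extra binomials. -/
def GG (n : ℕ) : Set (MPoly n) :=
  { X (vB false 3 (Fin.last n)) * X vl * X vb + X vl * X vc,
    X (vB false 3 (Fin.last n)) * X vl * X vbb + X vl * X vcb,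
    X (vC false 3 (Fin.last n)) * X (vF false (Fin.last n)) + X vl,
    X (vC true 3 (Fin.last n)) * X (vF true (Fin.last n))
      + X (vC false 3 (Fin.last n)) * X (vS false (Fin.last n)),
    X (vB true 3 (Fin.last n)) * X (vC false 3 (Fin.last n)) * X (vS false (Fin.last n))
      + X (vC false 3 (Fin.last n)) * X (vS false (Fin.last n)) * X vb,
    X (vB true 3 (Fin.last n)) * X (vC false 3 (Fin.last n)) * X (vS false (Fin.last n))
      + X (vC false 3 (Fin.last n)) * X (vS false (Fin.last n)) * X vbb,
    X (vC true 3 (Fin.last n)) * X (vS true (Fin.last n)) + X vs }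

/-- The set `𝓕 = P ∪ P̄ ∪ G`. -/
def FF (n : ℕ) : Set (MPoly n) := PP n false ∪ PP n true ∪ GG n

/-- The set `C = {ℓ c̄^{m1} c^{m2} : m1 + m2 = e(n)}` of monomials. -/
def Cmon (n : ℕ) : Set (Mon (MVar n)) :=
  {α | ∃ m1 m2 : ℕ, m1 + m2 = en n ∧
    α = Finsupp.single vl 1 + Finsupp.single vcb m1 + Finsupp.single vc m2}

/-- The set `D = {ℓ^j c̄^{m1} c^{m2} : j ∈ {0,1}, j + m1 + m2 ≤ e(n)}` of monomials. -/
def Dmon (n : ℕ) : Set (Mon (MVar n)) :=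
  {α | ∃ j m1 m2 : ℕ, j ≤ 1 ∧ j + m1 + m2 ≤ en n ∧
    α = Finsupp.single vl j + Finsupp.single vcb m1 + Finsupp.single vc m2}

/-- An injective rank function on the variables realizing the variable ordering
(from least to greatest): `s, c, c̄, ℓ, b, b̄`; then `s_0,…,s_n`; `f_0,…,f_n`;
`c_{10},…,c_{1n}; …; c_{40},…,c_{4n}`; `b_{10},…,b_{4n}`; `q_{10},…,q_{4n}`;
then the barred variables in the same pattern. -/
def vrank (n : ℕ) : MVar n → ℕ
  | .vs => 0
  | .vc => 1
  | .vcb => 2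
  | .vl => 3
  | .vb => 4
  | .vbb => 5
  | .vS bar i => 6 + (cond bar (14 * (n+1)) 0) + (i : ℕ)
  | .vF bar i => 6 + (cond bar (14 * (n+1)) 0) + (n+1) + (i : ℕ)
  | .vC bar j i => 6 + (cond bar (14 * (n+1)) 0) + 2*(n+1) + (j : ℕ)*(n+1) + (i : ℕ)
  | .vB bar j i => 6 + (cond bar (14 * (n+1)) 0) + 6*(n+1) + (j : ℕ)*(n+1) + (i : ℕ)
  | .vQ bar j i => 6 + (cond bar (14 * (n+1)) 0) + 10*(n+1) + (j : ℕ)*(n+1) + (i : ℕ)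

/-- The lexicographic monomial order on `X`: `t ≼_lex u` iff `t = u` or the exponents differ
somewhere and at the greatest variable (w.r.t. `vrank`) where they differ, the exponent of
`t` is smaller. -/
def lexLe (n : ℕ) (t u : Mon (MVar n)) : Prop :=
  t = u ∨ ∃ x : MVar n, t x < u x ∧ ∀ y : MVar n, vrank n x < vrank n y → t y = u y

/-- The total degree of a monomial. -/
def mdeg {σ : Type*} (t : Mon σ) : ℕ := t.sum fun _ k => k

/-- The degree lexicographic monomial order. -/
def degLexLe (n : ℕ) (t u : Mon (MVar n)) : Prop :=
  mdeg t < mdeg u ∨ (mdeg t = mdeg u ∧ lexLe n t u)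

/-- Weighted degree of a monomial with respect to a weight map `w`. -/
noncomputable def wdeg {n : ℕ} (w : MVar n → ℝ) (t : Mon (MVar n)) : ℝ :=
  t.sum fun x k => (k : ℝ) * w x

/-- The weighted monomial order determined by the weight map `w`. -/
def wLe {n : ℕ} (w : MVar n → ℝ) (t u : Mon (MVar n)) : Prop := t = u ∨ wdeg w t < wdeg w u

/-!
Write `e = e(m)`. Modulo `P`, the monomial `c_{im} s_m` equals `b_{im}^e c_{im} f_m`: level `m + 1`
runs two nested loops of `e` rounds each, using the four counters of level `m`, and so counts to
`e(m + 1) = e(m)²`. Hence, for `m₁ + m₂ = e(n)`, trading `ℓ c` for `ℓ b_{4n} b` and `ℓ c̄` for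
`ℓ b_{4n} b̄` fills the counter `b_{4n}` completely, the program can run back from `f_n` to `s_n`,
and the barred program then shows `ℓ c̄^{m₁} c^{m₂} + s ∈ ⟨𝓕⟩`. So `ℓ c̄^{m₁} c^{m₂}` is a head
monomial of `⟨𝓕⟩`.

No proper divisor of it is. Since `𝓕` consists of differences of two monomials, the coefficients
of a polynomial in `⟨𝓕⟩` sum to zero over each congruence class of monomials modulo `𝓕`, so the
least element of a class is not a head monomial. If `a + b < e(n)`, the counter never fills, the
program never gets back to `s_n`, and every monomial met on the way is at least `ℓ c^a c̄^b`;
and `c^a c̄^b` is alone in its class. Consequently a Gröbner basis contains, for each of the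
`e(n) + 1` pairs `(m₁, m₂)`, an element with head monomial `ℓ c̄^{m₁} c^{m₂}`.
-/

theorem en_zero : en 0 = 2 := by simp only [en, pow_zero, pow_one]

theorem en_succ (m : ℕ) : en (m + 1) = en m ^ 2 := by simp only [en, pow_succ 2 m, pow_mul]

theorem en_pos (m : ℕ) : 0 < en m := Nat.pos_of_neZero (2 ^ 2 ^ m)

section Derivation

variable {R : Type*} [CommRing R] {s f S F C B : R} {e : ℕ}

theorem inner_loop {q₁ q₂ c₁ c₂ b₁ b₂ : R}
    (hc₁ : c₁ * s = b₁ ^ e * c₁ * f) (hc₂ : c₂ * s = b₂ ^ e * c₂ * f)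
    (hswitch : q₂ * c₂ * f = q₁ * c₁ * f)
    (hcount : q₁ * b₂ * B * C * f = q₁ * b₁ * C * f) :
    q₁ * c₁ * s * C = B ^ e * (q₂ * c₂ * s * C) := by
  have hstep : SemiconjBy (q₁ * C * f) b₁ (b₂ * B) := by
    rw [SemiconjBy]; linear_combination -hcount
  calc q₁ * c₁ * s * C = c₁ * (q₁ * C * f * b₁ ^ e) := by linear_combination q₁ * C * hc₁
    _ = c₁ * ((b₂ * B) ^ e * (q₁ * C * f)) := by rw [hstep.pow_right e]
    _ = (b₂ * B) ^ e * (q₂ * c₂ * f) * C := by rw [hswitch]; ring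
    _ = B ^ e * (q₂ * c₂ * s * C) := by linear_combination -q₂ * C * B ^ e * hc₂

theorem outer_loop {x y b₀ b₃ : R} (hinner : x * C = B ^ e * (y * C)) (hreturn : y * b₀ = x * b₃)
    (k : ℕ) : y * C * b₀ ^ k = (b₃ * B ^ e) ^ k * (y * C) := by
  have hstep : SemiconjBy (y * C) b₀ (b₃ * B ^ e) := by
    rw [SemiconjBy]; linear_combination C * hreturn + b₃ * hinner
  exact hstep.pow_right k

theorem counter_square (he : 0 < e) (q c b : Fin 4 → R)
    (hc : ∀ j, c j * s = b j ^ e * c j * f)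
    (hstart : q 0 * c 0 * s = S)
    (hdec : q 1 * c 1 * s = q 0 * b 0 * c 0 * f)
    (hswitch : q 2 * c 2 * f = q 1 * c 1 * f)
    (hreturn : q 2 * b 0 * c 2 * s = q 1 * b 3 * c 1 * s)
    (hexit : q 3 * b 3 * c 3 * f = q 2 * c 2 * s)
    (hfinish : q 3 * c 3 * s = F)
    (hcount : q 1 * b 2 * B * C * f = q 1 * b 1 * C * f) :
    C * S = B ^ e ^ 2 * C * F := by
  obtain ⟨k, rfl⟩ : ∃ k, e = k + 1 := ⟨e - 1, by omega⟩
  have hinner := inner_loop (hc 1) (hc 2) hswitch hcount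
  have houter := outer_loop hinner (b₀ := b 0) (b₃ := b 3) (by linear_combination hreturn) k
  calc C * S = q 0 * b 0 ^ (k + 1) * c 0 * f * C := by
        linear_combination -C * hstart + q 0 * C * hc 0
    _ = q 1 * c 1 * s * C * b 0 ^ k := by linear_combination -b 0 ^ k * C * hdec
    _ = B ^ (k + 1) * (q 2 * c 2 * s * C * b 0 ^ k) := by rw [hinner]; ring
    _ = B ^ (k + 1) * ((b 3 * B ^ (k + 1)) ^ k * (q 2 * c 2 * s * C)) := by rw [houter]
    _ = B ^ (k + 1) ^ 2 * (q 3 * b 3 ^ (k + 1) * c 3 * f * C) := by rw [← hexit]; ring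
    _ = B ^ (k + 1) ^ 2 * C * F := by
        linear_combination C * B ^ (k + 1) ^ 2 * (hfinish - q 3 * hc 3)

theorem mul_pow_mul_pow_eq_of_counters {l c c' b b' t : R} {S' F' C' B' : R} {m₁ m₂ : ℕ}
    (h : C * S = B ^ (m₁ + m₂) * C * F) (h' : C' * S' = B' ^ (m₁ + m₂) * C' * F')
    (hb : B * l * b = l * c) (hb' : B * l * b' = l * c') (hl : C * F = l)
    (hlink : C' * F' = C * S) (hB : B' * C * S = C * S * b) (hB' : B' * C * S = C * S * b')
    (ht : C' * S' = t) : l * c' ^ m₁ * c ^ m₂ = t := by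
  have hc : SemiconjBy l c (B * b) := by rw [SemiconjBy]; linear_combination -hb
  have hc' : SemiconjBy l c' (B * b') := by rw [SemiconjBy]; linear_combination -hb'
  have hsb : SemiconjBy (C * S) b B' := by rw [SemiconjBy]; linear_combination -hB
  have hsb' : SemiconjBy (C * S) b' B' := by rw [SemiconjBy]; linear_combination -hB'
  calc l * c' ^ m₁ * c ^ m₂ = (B * b') ^ m₁ * (l * c ^ m₂) := by rw [hc'.pow_right m₁]; ring
    _ = (B * b') ^ m₁ * ((B * b) ^ m₂ * l) := by rw [hc.pow_right m₂]
    _ = C * S * b' ^ m₁ * b ^ m₂ := by rw [← hl, h]; ring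
    _ = B' ^ m₁ * (C * S * b ^ m₂) := by rw [hsb'.pow_right m₁]; ring
    _ = B' ^ (m₁ + m₂) * C' * F' := by rw [hsb.pow_right m₂, ← hlink]; ring
    _ = t := by rw [← h', ht]

end Derivation

section Membership

theorem mk_eq_of_add_mem {R : Type*} [CommRing R] [CharP R 2] {I : Ideal R} {x y : R}
    (h : x + y ∈ I) :
    Ideal.Quotient.mk I x = Ideal.Quotient.mk I y := by
  rwa [Ideal.Quotient.eq, CharTwo.sub_eq_add]

variable {n : ℕ} {I : Ideal (MPoly n)}

theorem mk_counter_of_PP_subset {bar : Bool} (hI : PP n bar ⊆ I) (i : Fin (n + 1)) (j : Fin 4) :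
    Ideal.Quotient.mk I (X (vC bar j i) * X (vS bar i)) =
      Ideal.Quotient.mk I (X (vB bar j i) ^ en i * X (vC bar j i) * X (vF bar i)) := by
  induction i using Fin.induction generalizing j with
  | zero => exact (mk_eq_of_add_mem (hI (Or.inl ⟨j, by rw [Fin.val_zero, en_zero]⟩))).symm
  | succ i ih =>
    have hPm : ∀ ⦃x y⦄, x + y ∈ Pm n bar i → Ideal.Quotient.mk I x = Ideal.Quotient.mk I y :=
      fun x y h => mk_eq_of_add_mem (hI (Or.inr (Set.mem_iUnion.2 ⟨i, h⟩)))
    simp only [Fin.val_castSucc, map_mul, map_pow] at ih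
    rw [Fin.val_succ, en_succ]
    simp only [map_mul, map_pow]
    refine counter_square (en_pos i) (fun a => Ideal.Quotient.mk I (X (vQ bar a i.succ)))
      _ _ ih ?_ ?_ ?_ ?_ ?_ ?_ ?_
    case refine_7 => simpa only [map_mul] using hPm (Or.inr ⟨j, rfl⟩)
    all_goals simp only [← map_mul]; exact hPm (by simp [Pm])

theorem mul_pow_mul_pow_add_mem {m₁ m₂ : ℕ} (hm : m₁ + m₂ = en n) :
    (X vl * X vcb ^ m₁ * X vc ^ m₂ + X vs : MPoly n) ∈ Ideal.span (FF n) := by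
  have hsub : FF n ⊆ Ideal.span (FF n) := Ideal.subset_span
  have hcounter (bar : Bool) (hbar : PP n bar ⊆ FF n) :=
    mk_counter_of_PP_subset (hbar.trans hsub) (Fin.last n) 3
  have h := hcounter false fun _ hp => Or.inl (Or.inl hp)
  have h' := hcounter true fun _ hp => Or.inl (Or.inr hp)
  rw [← CharTwo.sub_eq_add, ← Ideal.Quotient.eq]
  rw [Fin.val_last, ← hm] at h h'
  simp only [map_mul, map_pow] at h h' ⊢
  refine mul_pow_mul_pow_eq_of_counters h h' (b := Ideal.Quotient.mk _ (X vb))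
    (b' := Ideal.Quotient.mk _ (X vbb)) ?_ ?_ ?_ ?_ ?_ ?_ ?_
  all_goals
    simp only [← map_mul]
    exact mk_eq_of_add_mem (hsub (Or.inr (by simp [GG])))

end Membership

section Saturation

/-- `A` is a union of classes of the congruence generated by the pairs in `r`: it cannot tell the
two sides of a rewriting step `w + α ↔ w + β` apart. -/
def IsSaturated {M : Type*} [Add M] (r : M → M → Prop) (A : Set M) : Prop :=
  ∀ ⦃α β⦄, r α β → ∀ w, w + α ∈ A ↔ w + β ∈ A

/-- The sum of the coefficients of a polynomial over the monomials in `A`. -/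
noncomputable def coeffSum {σ : Type*} (R : Type*) [CommSemiring R] (A : Set (Mon σ)) :
    MvPolynomial σ R →ₗ[R] R :=
  (basisMonomials σ R).constr R (A.indicator 1)

variable {σ : Type*} {A : Set (Mon σ)}

theorem coeffSum_monomial {R : Type*} [CommSemiring R] (t : Mon σ) (a : R) :
    coeffSum R A (monomial t a) = A.indicator (fun _ => a) t := by
  have h : coeffSum R A (monomial t 1) = A.indicator 1 t :=
    (basisMonomials σ R).constr_basis R (A.indicator 1) t
  rw [← mul_one a, ← smul_eq_mul, ← smul_monomial, map_smul, h]
  by_cases ht : t ∈ A <;> simp [ht]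

theorem coeffSum_eq_coeff {R : Type*} [CommSemiring R] {p : MvPolynomial σ R} {t : Mon σ}
    (ht : t ∈ A) (huniq : ∀ u ∈ p.support, u ∈ A → u = t) : coeffSum R A p = coeff t p := by
  rw [p.as_sum, map_sum, ← p.as_sum, Finset.sum_eq_single t]
  · rw [coeffSum_monomial, Set.indicator_of_mem ht]
  · intro u hu hne
    rw [coeffSum_monomial, Set.indicator_of_notMem fun hA => hne (huniq u hu hA)]
  · intro h
    rw [notMem_support_iff.1 h, monomial_zero, map_zero]

theorem coeffSum_eq_zero_of_mem_span {R : Type*} [CommRing R] {r : Mon σ → Mon σ → Prop}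
    {F : Set (MvPolynomial σ R)}
    (hF : ∀ p ∈ F, ∃ α β, r α β ∧ p = monomial α 1 - monomial β 1) (hA : IsSaturated r A)
    {p : MvPolynomial σ R} (hp : p ∈ Ideal.span F) : coeffSum R A p = 0 := by
  suffices h : ∀ q, coeffSum R A (q * p) = 0 by simpa only [one_mul] using h 1
  induction hp using Submodule.span_induction with
  | mem p hp =>
    obtain ⟨α, β, hr, rfl⟩ := hF p hp
    intro q
    induction q using MvPolynomial.induction_on' with
    | monomial w a =>
      have hiff := hA hr w
      rw [mul_sub, monomial_mul, monomial_mul, map_sub, coeffSum_monomial, coeffSum_monomial]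
      by_cases hβ : w + β ∈ A
      · rw [Set.indicator_of_mem (hiff.2 hβ), Set.indicator_of_mem hβ, sub_self]
      · rw [Set.indicator_of_notMem (mt hiff.1 hβ), Set.indicator_of_notMem hβ, sub_self]
    | add q q' hq hq' => rw [add_mul, map_add, hq, hq', add_zero]
  | zero => simp only [mul_zero, map_zero, implies_true]
  | add x y _ _ hx hy => intro q; rw [mul_add, map_add, hx, hy, add_zero]
  | smul a x _ hx => intro q; rw [smul_eq_mul, ← mul_assoc, hx]

theorem IsSaturated.not_isHT {μ : MonOrd σ} {r : Mon σ → Mon σ → Prop}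
    {F : Set (MvPolynomial σ (ZMod 2))}
    (hF : ∀ p ∈ F, ∃ α β, r α β ∧ p = monomial α 1 - monomial β 1) (hA : IsSaturated r A)
    {t : Mon σ} (ht : t ∈ A) (hleast : ∀ u ∈ A, μ.le t u) {p : MvPolynomial σ (ZMod 2)}
    (hp : p ∈ Ideal.span F) : ¬ IsHT μ.le p t := by
  intro ⟨htp, hmax⟩
  apply mem_support_iff.1 htp
  rw [← coeffSum_eq_coeff ht fun u hu huA => μ.le_antisymm _ _ (hmax u hu) (hleast u huA)]
  exact coeffSum_eq_zero_of_mem_span hF hA hp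

theorem IsSaturated.of_notMem {M : Type*} [Add M] {r : M → M → Prop} {A : Set M}
    (h : ∀ ⦃α β⦄, r α β → ∀ w, w + α ∉ A ∧ w + β ∉ A) : IsSaturated r A := fun _ _ hr w =>
  iff_of_false (h hr w).1 (h hr w).2

end Saturation

section MonomialOrder

variable {σ : Type*} (μ : MonOrd σ)

theorem MonOrd.add_le_add' {t u t' u' : Mon σ} (h : μ.le t u) (h' : μ.le t' u') :
    μ.le (t + t') (u + u') :=
  μ.le_trans _ _ _ (μ.add_le_add _ _ _ h) (by simpa only [add_comm u] using μ.add_le_add _ _ u h')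

theorem MonOrd.le_self_add (t u : Mon σ) : μ.le t (t + u) := by
  simpa only [zero_add, add_comm u] using μ.add_le_add _ _ t (μ.zero_le u)

theorem MonOrd.nsmul_le_nsmul {t u : Mon σ} (h : μ.le t u) (k : ℕ) : μ.le (k • t) (k • u) := by
  induction k with
  | zero => rw [zero_smul, zero_smul]; exact μ.le_refl 0
  | succ k ih => rw [succ_nsmul, succ_nsmul]; exact μ.add_le_add' ih h

variable {μ}

theorem IsHT.unique {p : MvPolynomial σ (ZMod 2)} {t u : Mon σ} (ht : IsHT μ.le p t)
    (hu : IsHT μ.le p u) : t = u :=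
  μ.le_antisymm _ _ (hu.2 t ht.1) (ht.2 u hu.1)

theorem IsHT.ne_zero {r : Mon σ → Mon σ → Prop} {p : MvPolynomial σ (ZMod 2)}
    {t : Mon σ} (ht : IsHT r p t) : p ≠ 0 :=
  ne_zero_iff.2 ⟨t, mem_support_iff.1 ht.1⟩

theorem isHT_monomial_add_monomial {t u : Mon σ} (h : μ.lt u t) :
    IsHT μ.le (monomial t 1 + monomial u 1) t := by
  classical
  refine ⟨?_, fun v hv => ?_⟩
  · rw [mem_support_iff, coeff_add, coeff_monomial, coeff_monomial, if_pos rfl, if_neg h.2]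
    simp
  · rcases Finset.mem_union.1 (support_add hv) with hv | hv
    · rw [Finset.mem_singleton.1 (support_monomial_subset hv)]; exact μ.le_refl t
    · rw [Finset.mem_singleton.1 (support_monomial_subset hv)]; exact h.1

theorem IsGB.exists_isHT_le {r : Mon σ → Mon σ → Prop} {G : Finset (MvPolynomial σ (ZMod 2))}
    {I : Ideal (MvPolynomial σ (ZMod 2))} (hG : IsGB r G I) {p : MvPolynomial σ (ZMod 2)}
    (hp : p ∈ I) {t : Mon σ} (ht : IsHT r p t) : ∃ g ∈ G, ∃ u ≤ t, IsHT r g u := by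
  have himg : HTset r (↑G : Set (MvPolynomial σ (ZMod 2))) =
      (fun u => monomial u 1) '' {u | ∃ g ∈ G, IsHT r g u} := by
    ext q
    constructor
    · rintro ⟨g, hg, -, u, hu, rfl⟩
      exact ⟨u, ⟨g, hg, hu⟩, rfl⟩
    · rintro ⟨u, ⟨g, hg, hu⟩, rfl⟩
      exact ⟨g, hg, hu.ne_zero, u, hu, rfl⟩
  have hmem : monomial t 1 ∈ Ideal.span (HTset r (↑G : Set (MvPolynomial σ (ZMod 2)))) :=
    hG.2.2 ▸ Ideal.subset_span ⟨p, hp, ht.ne_zero, t, ht, rfl⟩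
  rw [himg, mem_ideal_span_monomial_image] at hmem
  obtain ⟨u, ⟨g, hg, hu⟩, hle⟩ := hmem t (by classical simp)
  exact ⟨g, hg, u, hle, hu⟩

end MonomialOrder

/-- The monomial `x`. -/
noncomputable abbrev var {σ : Type*} (x : σ) : Mon σ := Finsupp.single x 1

section Relations

variable {n : ℕ} (bar : Bool)

/-- The monomial `b_{1m}^{E 0} b_{2m}^{E 1} b_{3m}^{E 2} b_{4m}^{E 3}`. -/
noncomputable def counters (m : Fin (n + 1)) (E : Fin 4 → ℕ) : Mon (MVar n) :=
  ∑ c, E c • var (vB bar c m)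

/-- The monomial `q_{am} x b_{1(m-1)}^{E 0} ⋯ b_{4(m-1)}^{E 3}` with `m = j + 1`. -/
noncomputable def stub (j : Fin n) (a : Fin 4) (x : MVar n) (E : Fin 4 → ℕ) : Mon (MVar n) :=
  var (vQ bar a j.succ) + counters bar j.castSucc E + var x

/-- The monomial `q_{am} c_{a(m-1)} x b_{1(m-1)}^{E 0} ⋯ b_{4(m-1)}^{E 3}` with `m = j + 1`, the
common shape of the sides of the binomials in `P_m` that do not involve `c_{im}`. -/
noncomputable def side (j : Fin n) (a : Fin 4) (x : MVar n) (E : Fin 4 → ℕ) : Mon (MVar n) :=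
  var (vC bar a j.castSucc) + stub bar j a x E

/-- The pairs of monomials whose difference is a binomial in `P_0`. -/
inductive BaseRel : Mon (MVar n) → Mon (MVar n) → Prop
  | mk (c : Fin 4) : BaseRel
      (var (vC bar c 0) + 2 • var (vB bar c 0) + var (vF bar 0))
      (var (vC bar c 0) + var (vS bar 0))

/-- The pairs of monomials whose difference is a binomial in `P_m`, `m = j + 1`. -/
inductive LevelRel (j : Fin n) : Mon (MVar n) → Mon (MVar n) → Prop
  | start : LevelRel j (side bar j 0 (vS bar j.castSucc) 0) (var (vS bar j.succ))
  | dec : LevelRel j (side bar j 1 (vS bar j.castSucc) 0)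
      (side bar j 0 (vF bar j.castSucc) (Pi.single 0 1))
  | switch : LevelRel j (side bar j 2 (vF bar j.castSucc) 0) (side bar j 1 (vF bar j.castSucc) 0)
  | restart : LevelRel j (side bar j 2 (vS bar j.castSucc) (Pi.single 0 1))
      (side bar j 1 (vS bar j.castSucc) (Pi.single 3 1))
  | exit : LevelRel j (side bar j 3 (vF bar j.castSucc) (Pi.single 3 1))
      (side bar j 2 (vS bar j.castSucc) 0)
  | finish : LevelRel j (side bar j 3 (vS bar j.castSucc) 0) (var (vF bar j.succ))
  | count (c : Fin 4) : LevelRel j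
      (var (vC bar c j.succ) + var (vB bar c j.succ)
        + stub bar j 1 (vF bar j.castSucc) (Pi.single 2 1))
      (var (vC bar c j.succ) + stub bar j 1 (vF bar j.castSucc) (Pi.single 1 1))

/-- The pairs of monomials whose difference is a binomial in `P_0 ∪ ⋯ ∪ P_m`. -/
inductive RelUpTo (m : Fin (n + 1)) (α β : Mon (MVar n)) : Prop
  | base (h : BaseRel bar α β)
  | level (j : Fin n) (hj : j.succ ≤ m) (h : LevelRel bar j α β)

/-- The pairs of monomials whose difference is a binomial in `GG n`. -/
inductive OuterRel : Mon (MVar n) → Mon (MVar n) → Prop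
  | exchange : OuterRel (var (vB false 3 (Fin.last n)) + var vb + var vl) (var vc + var vl)
  | exchangeBar : OuterRel (var (vB false 3 (Fin.last n)) + var vbb + var vl) (var vcb + var vl)
  | finish : OuterRel (var (vC false 3 (Fin.last n)) + var (vF false (Fin.last n))) (var vl)
  | link : OuterRel (var (vC true 3 (Fin.last n)) + var (vF true (Fin.last n)))
      (var (vC false 3 (Fin.last n)) + var (vS false (Fin.last n)))
  | absorb : OuterRel
      (var (vB true 3 (Fin.last n)) + var (vC false 3 (Fin.last n)) + var (vS false (Fin.last n)))
      (var vb + var (vC false 3 (Fin.last n)) + var (vS false (Fin.last n)))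
  | absorbBar : OuterRel
      (var (vB true 3 (Fin.last n)) + var (vC false 3 (Fin.last n)) + var (vS false (Fin.last n)))
      (var vbb + var (vC false 3 (Fin.last n)) + var (vS false (Fin.last n)))
  | start : OuterRel (var (vC true 3 (Fin.last n)) + var (vS true (Fin.last n))) (var vs)

/-- The pairs of monomials whose difference is a binomial in `FF n`. -/
inductive FFRel (α β : Mon (MVar n)) : Prop
  | program (bar : Bool) (h : RelUpTo bar (Fin.last n) α β)
  | outer (h : OuterRel α β)

variable {bar}

theorem counters_apply {m i : Fin (n + 1)} {E : Fin 4 → ℕ} {c : Fin 4} :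
    counters bar m E (vB bar c i) = if i = m then E c else 0 := by
  rcases eq_or_ne i m with rfl | h
  · simp [counters, Finsupp.single_apply]
  · simp [counters, h]

theorem counters_apply_of_ne {m : Fin (n + 1)} {E : Fin 4 → ℕ} {x : MVar n}
    (hx : ∀ c, x ≠ vB bar c m) : counters bar m E x = 0 := by
  simp [counters, fun c => (hx c).symm]

theorem counters_zero (m : Fin (n + 1)) : counters bar m 0 = 0 := by simp [counters]

theorem counters_add (m : Fin (n + 1)) (E E' : Fin 4 → ℕ) :
    counters bar m (E + E') = counters bar m E + counters bar m E' := by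
  simp [counters, add_smul, Finset.sum_add_distrib]

theorem counters_single (m : Fin (n + 1)) (c : Fin 4) (k : ℕ) :
    counters bar m (Pi.single c k) = k • var (vB bar c m) := by
  simp only [counters]
  rw [Finset.sum_eq_single c (fun d _ hd => by rw [Pi.single_eq_of_ne hd, zero_smul]) (by simp),
    Pi.single_eq_same]

theorem X_eq_monomial_var {σ R : Type*} [CommSemiring R] (x : σ) :
    (X x : MvPolynomial σ R) = monomial (var x) 1 := rfl

theorem exists_baseRel_of_mem_P0 {p : MPoly n} (hp : p ∈ P0 n bar) :
    ∃ α β, BaseRel bar α β ∧ p = monomial α 1 - monomial β 1 := by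
  obtain ⟨c, rfl⟩ := hp
  refine ⟨_, _, .mk c, ?_⟩
  simp only [CharTwo.sub_eq_add, X_eq_monomial_var, monomial_pow, monomial_mul, one_pow, mul_one]
  congr 3
  abel

theorem exists_levelRel_of_mem_Pm {j : Fin n} {p : MPoly n} (hp : p ∈ Pm n bar j) :
    ∃ α β, LevelRel bar j α β ∧ p = monomial α 1 - monomial β 1 := by
  rcases hp with (rfl | rfl | rfl | rfl | rfl | rfl) | ⟨c, rfl⟩
  on_goal 1 => refine ⟨_, _, .start, ?_⟩
  on_goal 2 => refine ⟨_, _, .dec, ?_⟩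
  on_goal 3 => refine ⟨_, _, .switch, ?_⟩
  on_goal 4 => refine ⟨_, _, .restart, ?_⟩
  on_goal 5 => refine ⟨_, _, .exit, ?_⟩
  on_goal 6 => refine ⟨_, _, .finish, ?_⟩
  on_goal 7 => refine ⟨_, _, .count c, ?_⟩
  all_goals
    simp only [CharTwo.sub_eq_add, X_eq_monomial_var, monomial_mul, mul_one, side, stub,
      counters_zero, counters_single, one_smul]
    congr 3 <;> abel

theorem exists_outerRel_of_mem_GG {p : MPoly n} (hp : p ∈ GG n) :
    ∃ α β, OuterRel α β ∧ p = monomial α 1 - monomial β 1 := by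
  rcases hp with rfl | rfl | rfl | rfl | rfl | rfl | rfl
  on_goal 1 => refine ⟨_, _, .exchange, ?_⟩
  on_goal 2 => refine ⟨_, _, .exchangeBar, ?_⟩
  on_goal 3 => refine ⟨_, _, .finish, ?_⟩
  on_goal 4 => refine ⟨_, _, .link, ?_⟩
  on_goal 5 => refine ⟨_, _, .absorb, ?_⟩
  on_goal 6 => refine ⟨_, _, .absorbBar, ?_⟩
  on_goal 7 => refine ⟨_, _, .start, ?_⟩
  all_goals simp only [CharTwo.sub_eq_add, X_eq_monomial_var, monomial_mul, mul_one]
  all_goals congr 3 <;> abel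

theorem exists_ffRel_of_mem_FF {p : MPoly n} (hp : p ∈ FF n) :
    ∃ α β, FFRel α β ∧ p = monomial α 1 - monomial β 1 := by
  have hPP : ∀ bar, p ∈ PP n bar → ∃ α β, FFRel α β ∧ p = monomial α 1 - monomial β 1 := by
    rintro bar (hp | hp)
    · obtain ⟨α, β, h, hp⟩ := exists_baseRel_of_mem_P0 hp
      exact ⟨α, β, .program bar (.base h), hp⟩
    · obtain ⟨j, hp⟩ := Set.mem_iUnion.1 hp
      obtain ⟨α, β, h, hp⟩ := exists_levelRel_of_mem_Pm hp
      exact ⟨α, β, .program bar (.level j (Fin.le_last _) h), hp⟩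
  rcases hp with (hp | hp) | hp
  · exact hPP false hp
  · exact hPP true hp
  · obtain ⟨α, β, h, hp⟩ := exists_outerRel_of_mem_GG hp
    exact ⟨α, β, .outer h, hp⟩

end Relations

section Configurations

variable {n : ℕ} {bar : Bool}

/-- `s_m` and `f_m`, with the value `u` each stands for: by the level-`m` program,
`c_{im} s_m` is `b_{im}^{e(m)} c_{im} f_m`. -/
inductive IsToken (bar : Bool) (m : Fin (n + 1)) : MVar n → ℕ → Prop
  | start : IsToken bar m (vS bar m) (en m)
  | finish : IsToken bar m (vF bar m) 0

/-- The counter identities of phase `a` (that is, while `q_{am}` is present) of the program that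
counts to `e * e`, where `v` is the value still to be released. Here `N` lists the exponents of
`b_1, …, b_4`, the value held inside the current call being credited to `b_a`; the counters
`b_1, b_4` run the outer loop and `b_2, b_3` the inner one. -/
def CounterBalance (a : Fin 4) (e v : ℕ) (N : Fin 4 → ℕ) : Prop :=
  v = e * N 0 + N 1 ∧ if a = 0 ∨ a = 3 then N 0 + N 3 = e ∧ N 1 = 0 ∧ N 2 = 0
    else N 0 + N 3 + 1 = e ∧ N 1 + N 2 = e

/-- The part of a level-`j + 1` configuration in phase `a` that is inert while the level-`j`
program runs: it calls counter `a` of level `j`, on behalf of counter `i` of level `j + 1`. -/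
noncomputable def outer (bar : Bool) (j : Fin n) (i a : Fin 4) (N : Fin 4 → ℕ) (k : ℕ) :
    Mon (MVar n) :=
  var (vQ bar a j.succ) + counters bar j.castSucc (Function.update N a 0) +
    (var (vC bar i j.succ) + k • var (vB bar i j.succ))

/-- The monomials that arise while the level-`m` program runs on counter `i`, next to an inert
factor `ρ`. The total `t` is invariant: it is the exponent of `b_{im}` plus the value still to be
released. -/
inductive Config (bar : Bool) :
    Fin (n + 1) → Fin 4 → ℕ → Mon (MVar n) → Set (Mon (MVar n))
  | token {m i x u} (k : ℕ) (ρ : Mon (MVar n)) (hx : IsToken bar m x u) :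
      Config bar m i (k + u) ρ (var (vC bar i m) + k • var (vB bar i m) + ρ + var x)
  | phase {j : Fin n} {i a N k v ρ τ} (hN : CounterBalance a (en j) v N)
      (hτ : Config bar j.castSucc a (N a) (outer bar j i a N k + ρ) τ) :
      Config bar j.succ i (k + v) ρ τ

/-- The variables that the level-`m` program may inspect while it runs on counter `i`. -/
def IsLocal (bar : Bool) (m : Fin (n + 1)) (i : Fin 4) : MVar n → Prop
  | vS bar' l | vF bar' l | vQ bar' _ l | vC bar' _ l => bar' = bar ∧ l ≤ m
  | vB bar' c l => bar' = bar ∧ (l < m ∨ l = m ∧ c = i)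
  | _ => False

/-- `ρ` contains no variable that the level-`m` program may inspect while it runs on counter
`i`. -/
def IsInert (bar : Bool) (m : Fin (n + 1)) (i : Fin 4) (ρ : Mon (MVar n)) : Prop :=
  ∀ x, IsLocal bar m i x → ρ x = 0

theorem IsLocal.succ {j : Fin n} {a i : Fin 4} {x : MVar n} (hx : IsLocal bar j.castSucc a x) :
    IsLocal bar j.succ i x := by
  have hj := j.castSucc_lt_succ
  cases x <;> simp only [IsLocal] at hx ⊢
  case vB =>
    exact ⟨hx.1, Or.inl (hx.2.elim (fun h => h.trans hj) fun h => h.1.trans_lt hj)⟩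
  all_goals exact ⟨hx.1, hx.2.trans hj.le⟩

theorem eq_of_outer_apply_ne_zero {j : Fin n} {i a : Fin 4} {N : Fin 4 → ℕ} {k : ℕ} {x : MVar n}
    (hx : outer bar j i a N k x ≠ 0) :
    x = vQ bar a j.succ ∨ (∃ c ≠ a, x = vB bar c j.castSucc) ∨ x = vC bar i j.succ ∨
      x = vB bar i j.succ := by
  contrapose! hx
  obtain ⟨hQ, hB, hC, hB'⟩ := hx
  have hcounters : counters bar j.castSucc (Function.update N a 0) x = 0 := by
    by_cases h : x = vB bar a j.castSucc
    · rw [h, counters_apply, if_pos rfl, Function.update_self]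
    · refine counters_apply_of_ne fun c hc => ?_
      rcases eq_or_ne c a with rfl | hca
      exacts [h hc, hB c hca hc]
  simp [outer, hcounters, hQ, hC, hB']

theorem outer_apply_eq_zero {j : Fin n} {i a : Fin 4} {N : Fin 4 → ℕ} {k : ℕ} {x : MVar n}
    (hx : IsLocal bar j.castSucc a x ∨ ¬ IsLocal bar j.succ i x) : outer bar j i a N k x = 0 := by
  contrapose! hx
  have hj := j.castSucc_lt_succ
  obtain rfl | ⟨c, hca, rfl⟩ | rfl | rfl := eq_of_outer_apply_ne_zero hx
  all_goals simp [IsLocal, hj.not_ge, hj.not_gt, hj.ne', *]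

theorem IsInert.outer {j : Fin n} {i : Fin 4} {ρ : Mon (MVar n)} (hρ : IsInert bar j.succ i ρ)
    (a : Fin 4) (N : Fin 4 → ℕ) (k : ℕ) :
    IsInert bar j.castSucc a (outer bar j i a N k + ρ) := fun x hx => by
  rw [Finsupp.add_apply, outer_apply_eq_zero (Or.inl hx), hρ x hx.succ]

theorem IsToken.isLocal {m l : Fin (n + 1)} {i : Fin 4} {x : MVar n} {u : ℕ}
    (hx : IsToken bar m x u) (hml : m ≤ l) : IsLocal bar l i x := by
  cases hx <;> exact ⟨rfl, hml⟩

theorem IsToken.value_unique {m : Fin (n + 1)} {x : MVar n} {u u' : ℕ} (hx : IsToken bar m x u)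
    (hx' : IsToken bar m x u') : u = u' := by
  cases hx <;> cases hx' <;> rfl

/-- `τ` contains `s_l` or `f_l` for some `l ≤ m`. A level-`m` program only ever rewrites such
monomials. -/
def HasToken (bar : Bool) (m : Fin (n + 1)) (τ : Mon (MVar n)) : Prop :=
  ∃ l ≤ m, ∃ x u, IsToken bar l x u ∧ τ x ≠ 0

theorem HasToken.mono {m m' : Fin (n + 1)} {τ : Mon (MVar n)} (h : HasToken bar m τ)
    (hm : m ≤ m') : HasToken bar m' τ :=
  let ⟨l, hl, hτ⟩ := h
  ⟨l, hl.trans hm, hτ⟩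

theorem HasToken.add_left {m : Fin (n + 1)} {τ : Mon (MVar n)} (h : HasToken bar m τ)
    (w : Mon (MVar n)) : HasToken bar m (w + τ) :=
  let ⟨l, hl, x, u, hx, hτ⟩ := h
  ⟨l, hl, x, u, hx, by simp [hτ]⟩

theorem IsToken.hasToken_add {l m : Fin (n + 1)} {x : MVar n} {u : ℕ} (hx : IsToken bar l x u)
    (hl : l ≤ m) (w : Mon (MVar n)) : HasToken bar m (w + var x) :=
  ⟨l, hl, x, u, hx, by simp⟩

theorem IsToken.hasToken_side {j : Fin n} {a : Fin 4} {x : MVar n} {u : ℕ} {E : Fin 4 → ℕ}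
    (hx : IsToken bar j.castSucc x u) : HasToken bar j.succ (side bar j a x E) :=
  (hx.hasToken_add j.castSucc_lt_succ.le _).add_left _

theorem Config.apply_of_not_isLocal {m : Fin (n + 1)} {i : Fin 4} {t : ℕ} {ρ τ : Mon (MVar n)}
    (hτ : Config bar m i t ρ τ) {x : MVar n} (hx : ¬ IsLocal bar m i x) : τ x = ρ x := by
  induction hτ with
  | @token m i y u k ρ hy =>
    have hne : ∀ z, IsLocal bar m i z → x ≠ z := by rintro _ hz rfl; exact hx hz
    simp [hne _ (hy.isLocal le_rfl), hne (vC bar i m) ⟨rfl, le_rfl⟩,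
      hne (vB bar i m) ⟨rfl, Or.inr ⟨rfl, rfl⟩⟩]
  | phase _ _ ih =>
    rw [ih (mt IsLocal.succ hx), Finsupp.add_apply, outer_apply_eq_zero (Or.inr hx), zero_add]

theorem IsToken.outer_apply {j : Fin n} {l : Fin (n + 1)} {x : MVar n} {u : ℕ}
    (hx : IsToken bar l x u) (i a : Fin 4) (N : Fin 4 → ℕ) (k : ℕ) :
    outer bar j i a N k x = 0 := by
  by_contra h
  cases hx <;> simpa using eq_of_outer_apply_ne_zero h

theorem config_add_token_iff {m : Fin (n + 1)} {i : Fin 4} {t u : ℕ} {ρ w : Mon (MVar n)}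
    {x : MVar n} (hρ : IsInert bar m i ρ) (hx : IsToken bar m x u) :
    w + var x ∈ Config bar m i t ρ ↔
      ∃ k, t = k + u ∧ w = var (vC bar i m) + k • var (vB bar i m) + ρ := by
  have hρx : ρ x = 0 := hρ x (hx.isLocal le_rfl)
  constructor
  · intro h
    have hpos : (w + var x) x ≠ 0 := by simp
    generalize hτ : w + var x = τ at h hpos
    cases h with
    | @token _ _ y u' k ρ hy =>
      obtain rfl : x = y := by
        by_contra hxy
        cases hx <;> cases hy <;> simp [hρx] at hpos hxy
      obtain rfl := hx.value_unique hy
      exact ⟨k, rfl, add_right_cancel hτ⟩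
    | @phase j _ a _ _ _ _ _ hN h =>
      have hx' : ¬ IsLocal bar j.castSucc a x := by
        cases hx <;> simp [IsLocal, j.castSucc_lt_succ.not_ge]
      rw [h.apply_of_not_isLocal hx', Finsupp.add_apply, hρx, hx.outer_apply] at hpos
      exact absurd rfl hpos
  · rintro ⟨k, rfl, rfl⟩
    exact .token k ρ hx

theorem config_succ_iff_of_hasToken {j : Fin n} {i : Fin 4} {t : ℕ} {ρ τ : Mon (MVar n)}
    (hρ : IsInert bar j.succ i ρ) (hτ : HasToken bar j.castSucc τ) :
    τ ∈ Config bar j.succ i t ρ ↔ ∃ a N k v, CounterBalance a (en j) v N ∧ t = k + v ∧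
      τ ∈ Config bar j.castSucc a (N a) (outer bar j i a N k + ρ) := by
  obtain ⟨l, hl, x, u, hx, hτx⟩ := hτ
  constructor
  · intro h
    have hlj := hl.trans_lt j.castSucc_lt_succ
    have hρx := hρ x (hx.isLocal hlj.le)
    generalize hm : j.succ = m at h
    cases h with
    | token k ρ hy =>
      subst hm
      refine absurd ?_ hτx
      cases hx <;> cases hy <;> simp [hρx, hlj.ne']
    | @phase j' _ a N k v _ _ hN h =>
      obtain rfl := Fin.succ_injective _ hm
      exact ⟨a, N, k, v, hN, rfl, h⟩
  · rintro ⟨a, N, k, v, hN, rfl, h⟩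
    exact .phase hN h

theorem counters_update_zero_add (m : Fin (n + 1)) (N : Fin 4 → ℕ) (a : Fin 4) (k : ℕ) :
    counters bar m (Function.update N a 0) + k • var (vB bar a m) =
      counters bar m (Function.update N a k) := by
  rw [← counters_single, ← counters_add]
  congr 1
  ext c
  rcases eq_or_ne c a with rfl | h <;> simp [*]

theorem config_succ_add_token_iff {j : Fin n} {i : Fin 4} {t u : ℕ} {ρ w : Mon (MVar n)}
    {x : MVar n} (hρ : IsInert bar j.succ i ρ) (hx : IsToken bar j.castSucc x u) :
    w + var x ∈ Config bar j.succ i t ρ ↔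
      ∃ a N k v, CounterBalance a (en j) v (N + Pi.single a u) ∧ t = k + v ∧
        w = var (vC bar a j.castSucc) + (var (vQ bar a j.succ) + counters bar j.castSucc N) +
          (var (vC bar i j.succ) + k • var (vB bar i j.succ) + ρ) := by
  rw [config_succ_iff_of_hasToken hρ (hx.hasToken_add le_rfl w)]
  constructor
  · rintro ⟨a, N, k, v, hN, rfl, h⟩
    obtain ⟨k', hk', rfl⟩ := (config_add_token_iff (hρ.outer a N k) hx).1 h
    have hN' : Function.update N a k' + Pi.single a u = N := by
      ext c
      rcases eq_or_ne c a with rfl | h <;> simp [*]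
    refine ⟨a, Function.update N a k', k, v, by rwa [hN'], rfl, ?_⟩
    rw [← counters_update_zero_add, outer]
    abel
  · rintro ⟨a, N, k, v, hN, rfl, rfl⟩
    refine ⟨a, N + Pi.single a u, k, v, hN, rfl,
      (config_add_token_iff (hρ.outer a _ k) hx).2 ⟨N a, by simp, ?_⟩⟩
    have hN' : Function.update (N + Pi.single a u) a 0 = Function.update N a 0 := by
      ext c
      rcases eq_or_ne c a with rfl | h <;> simp [*]
    have hN'' := counters_update_zero_add (bar := bar) j.castSucc N a (N a)
    rw [Function.update_eq_self] at hN''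
    rw [outer, hN', ← hN'']
    abel

theorem config_add_stub_iff {j : Fin n} {i a : Fin 4} {t u : ℕ} {ρ w : Mon (MVar n)}
    {x : MVar n} {E : Fin 4 → ℕ} (hρ : IsInert bar j.succ i ρ) (hx : IsToken bar j.castSucc x u) :
    w + stub bar j a x E ∈ Config bar j.succ i t ρ ↔
      ∃ N k v, CounterBalance a (en j) v (N + E + Pi.single a u) ∧ t = k + v ∧
        w = var (vC bar a j.castSucc) + counters bar j.castSucc N +
          (var (vC bar i j.succ) + k • var (vB bar i j.succ) + ρ) := by
  rw [stub, ← add_assoc, config_succ_add_token_iff hρ hx]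
  constructor
  · rintro ⟨a', N, k, v, hN, rfl, hw⟩
    have hQ := DFunLike.congr_fun hw (vQ bar a j.succ)
    have hB := fun c => DFunLike.congr_fun hw (vB bar c j.castSucc)
    have hρQ : ρ (vQ bar a j.succ) = 0 := hρ _ ⟨rfl, le_rfl⟩
    have hρB : ∀ c, ρ (vB bar c j.castSucc) = 0 :=
      fun c => hρ _ ⟨rfl, Or.inl j.castSucc_lt_succ⟩
    obtain rfl : a' = a := by
      by_contra h
      simp [counters_apply_of_ne, h, hρQ] at hQ
    have hE : E ≤ N := fun c => by
      have hwE : w (vB bar c j.castSucc) + E c = N c := by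
        simpa [counters_apply, j.castSucc_lt_succ.ne', hρB c] using hB c
      exact hwE ▸ Nat.le_add_left _ _
    refine ⟨N - E, k, v, by rwa [tsub_add_cancel_of_le hE], rfl, ?_⟩
    rw [← tsub_add_cancel_of_le hE, counters_add] at hw
    apply add_right_cancel (b := var (vQ bar a' j.succ) + counters bar j.castSucc E)
    rw [hw]
    abel
  · rintro ⟨N, k, v, hN, rfl, rfl⟩
    refine ⟨a, N + E, k, v, hN, rfl, ?_⟩
    rw [counters_add]
    abel

theorem config_add_side_iff {j : Fin n} {i a : Fin 4} {t u : ℕ} {ρ w : Mon (MVar n)}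
    {x : MVar n} {E : Fin 4 → ℕ} (hρ : IsInert bar j.succ i ρ) (hx : IsToken bar j.castSucc x u) :
    w + side bar j a x E ∈ Config bar j.succ i t ρ ↔
      ∃ N k v, CounterBalance a (en j) v (N + E + Pi.single a u) ∧ t = k + v ∧
        w = counters bar j.castSucc N +
          (var (vC bar i j.succ) + k • var (vB bar i j.succ) + ρ) := by
  rw [side, ← add_assoc, config_add_stub_iff hρ hx]
  simp only [add_comm w, add_assoc, add_right_inj]

section

variable {e v : ℕ} {N : Fin 4 → ℕ}

theorem counterBalance_start :
    CounterBalance 0 e v (N + Pi.single 0 e) ↔ N = 0 ∧ v = e * e := by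
  constructor
  · intro h
    have hN : ∀ c, N c = 0 := by
      intro c; fin_cases c <;> grind [CounterBalance, Pi.add_apply]
    exact ⟨funext hN, by grind [CounterBalance, Pi.add_apply]⟩
  · rintro ⟨rfl, rfl⟩
    simp [CounterBalance]

theorem counterBalance_dec : CounterBalance 1 e v (N + Pi.single 1 e) ↔
    CounterBalance 0 e v (N + Pi.single 0 1) := by
  grind [CounterBalance, Pi.add_apply]

theorem counterBalance_switch : CounterBalance 2 e v N ↔ CounterBalance 1 e v N := by
  simp [CounterBalance]

theorem counterBalance_restart : CounterBalance 2 e v (N + Pi.single 0 1 + Pi.single 2 e) ↔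
    CounterBalance 1 e v (N + Pi.single 3 1 + Pi.single 1 e) := by
  grind [CounterBalance, Pi.add_apply]

theorem counterBalance_exit : CounterBalance 3 e v (N + Pi.single 3 1) ↔
    CounterBalance 2 e v (N + Pi.single 2 e) := by
  grind [CounterBalance, Pi.add_apply]

theorem counterBalance_finish :
    CounterBalance 3 e v (N + Pi.single 3 e) ↔ N = 0 ∧ v = 0 := by
  constructor
  · intro h
    have hN : ∀ c, N c = 0 := by
      intro c; fin_cases c <;> grind [CounterBalance, Pi.add_apply]
    exact ⟨funext hN, by grind [CounterBalance, Pi.add_apply]⟩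
  · rintro ⟨rfl, rfl⟩
    simp [CounterBalance]

theorem counterBalance_count : CounterBalance 1 e v (N + Pi.single 2 1) ↔
    CounterBalance 1 e (v + 1) (N + Pi.single 1 1) := by
  grind [CounterBalance, Pi.add_apply]

end

theorem add_selector_eq_iff {m : Fin (n + 1)} {i c : Fin 4} {d k : ℕ} {σ w : Mon (MVar n)}
    (hC : ∀ c, σ (vC bar c m) = 0) (hB : σ (vB bar i m) = 0) :
    w + (var (vC bar c m) + d • var (vB bar c m)) =
        var (vC bar i m) + k • var (vB bar i m) + σ ↔
      c = i ∧ ∃ k', k = k' + d ∧ w = k' • var (vB bar i m) + σ := by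
  constructor
  · intro h
    obtain rfl : c = i := by
      by_contra hci
      simpa [hC, Ne.symm hci] using DFunLike.congr_fun h (vC bar c m)
    obtain ⟨k', rfl⟩ : ∃ k', k = k' + d :=
      ⟨w (vB bar c m), by simpa [hB] using (DFunLike.congr_fun h (vB bar c m)).symm⟩
    refine ⟨rfl, k', rfl, add_right_cancel (b := var (vC bar c m) + d • var (vB bar c m)) ?_⟩
    rw [h, add_smul]
    abel
  · rintro ⟨rfl, k', rfl, rfl⟩
    rw [add_smul]
    abel

theorem isSaturated_config_baseRel {i : Fin 4} {t : ℕ} {ρ : Mon (MVar n)}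
    (hρ : IsInert bar 0 i ρ) : IsSaturated (BaseRel bar) (Config bar 0 i t ρ) := by
  rintro _ _ ⟨c⟩ w
  have hiff := fun d k => add_selector_eq_iff (bar := bar) (c := c) (d := d) (k := k) (w := w)
    (fun c => hρ (vC bar c 0) ⟨rfl, le_rfl⟩) (hρ (vB bar i 0) ⟨rfl, Or.inr ⟨rfl, rfl⟩⟩)
  have hS := hiff 0
  simp only [zero_smul, add_zero] at hS
  rw [← add_assoc, ← add_assoc w _ (var (vS bar 0)), config_add_token_iff hρ .finish,
    config_add_token_iff hρ .start]
  simp only [hiff, hS]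
  constructor
  · rintro ⟨_, rfl, rfl, k, rfl, rfl⟩
    exact ⟨k, by simp [en_zero], rfl, k, rfl, rfl⟩
  · rintro ⟨k, rfl, rfl, _, rfl, rfl⟩
    exact ⟨k + 2, by simp [en_zero], rfl, k, rfl, rfl⟩

theorem config_add_count_iff {j : Fin n} {i c : Fin 4} {t : ℕ} {ρ w : Mon (MVar n)}
    (hρ : IsInert bar j.succ i ρ) :
    w + (var (vC bar c j.succ) + var (vB bar c j.succ) +
        stub bar j 1 (vF bar j.castSucc) (Pi.single 2 1)) ∈ Config bar j.succ i t ρ ↔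
      w + (var (vC bar c j.succ) + stub bar j 1 (vF bar j.castSucc) (Pi.single 1 1)) ∈
        Config bar j.succ i t ρ := by
  have hcomm : ∀ (N : Fin 4 → ℕ) (k : ℕ),
      var (vC bar 1 j.castSucc) + counters bar j.castSucc N +
        (var (vC bar i j.succ) + k • var (vB bar i j.succ) + ρ) =
      var (vC bar i j.succ) + k • var (vB bar i j.succ) +
        (var (vC bar 1 j.castSucc) + counters bar j.castSucc N + ρ) := fun N k => by abel
  have hj := j.castSucc_lt_succ.ne
  have hiff := fun (N : Fin 4 → ℕ) (d k : ℕ) => add_selector_eq_iff (bar := bar) (m := j.succ)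
    (i := i) (c := c)
    (σ := var (vC bar 1 j.castSucc) + counters bar j.castSucc N + ρ) (d := d) (k := k) (w := w)
    (fun c => by simp [counters_apply_of_ne, hj, hρ (vC bar c j.succ) ⟨rfl, le_rfl⟩])
    (by simp [counters_apply, hj.symm, hρ (vB bar i j.succ) ⟨rfl, Or.inr ⟨rfl, rfl⟩⟩])
  have h₀ := fun N => hiff N 0
  have h₁ := fun N => hiff N 1
  simp only [zero_smul, one_smul, add_zero] at h₀ h₁
  simp only [← add_assoc w _ (stub _ _ _ _ _), config_add_stub_iff hρ .finish]
  simp only [hcomm, h₀, h₁, Pi.single_zero, add_zero]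
  constructor
  · rintro ⟨N, _, v, hN, rfl, rfl, k, rfl, rfl⟩
    exact ⟨N, k, v + 1, counterBalance_count.1 hN, by omega, rfl, k, rfl, rfl⟩
  · rintro ⟨N, k, v, hN, rfl, rfl, _, rfl, rfl⟩
    obtain ⟨v, rfl⟩ : ∃ v', v = v' + 1 :=
      Nat.exists_eq_add_of_le' (by grind [CounterBalance, Pi.add_apply])
    exact ⟨N, k + 1, v, counterBalance_count.2 hN, by omega, rfl, k, rfl, rfl⟩

theorem config_add_side_iff_config_add_side {j : Fin n} {i a a' : Fin 4} {t u u' : ℕ}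
    {ρ : Mon (MVar n)} {x x' : MVar n} {E E' : Fin 4 → ℕ} (hρ : IsInert bar j.succ i ρ)
    (hx : IsToken bar j.castSucc x u) (hx' : IsToken bar j.castSucc x' u')
    (h : ∀ (N : Fin 4 → ℕ) (v : ℕ), CounterBalance a (en j) v (N + E + Pi.single a u) ↔
      CounterBalance a' (en j) v (N + E' + Pi.single a' u')) (w : Mon (MVar n)) :
    w + side bar j a x E ∈ Config bar j.succ i t ρ ↔
      w + side bar j a' x' E' ∈ Config bar j.succ i t ρ := by
  simp only [config_add_side_iff hρ hx, config_add_side_iff hρ hx', h]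

theorem config_add_side_iff_config_add_token {j : Fin n} {i a : Fin 4} {t u u' : ℕ}
    {ρ : Mon (MVar n)} {x x' : MVar n} (hρ : IsInert bar j.succ i ρ)
    (hx : IsToken bar j.castSucc x u) (hx' : IsToken bar j.succ x' u')
    (h : ∀ (N : Fin 4 → ℕ) (v : ℕ), CounterBalance a (en j) v (N + Pi.single a u) ↔ N = 0 ∧ v = u')
    (w : Mon (MVar n)) :
    w + side bar j a x 0 ∈ Config bar j.succ i t ρ ↔ w + var x' ∈ Config bar j.succ i t ρ := by
  rw [config_add_side_iff hρ hx, config_add_token_iff hρ hx']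
  simp only [add_zero, h]
  constructor
  · rintro ⟨_, k, _, ⟨rfl, rfl⟩, rfl, rfl⟩
    exact ⟨k, rfl, by rw [counters_zero, zero_add]⟩
  · rintro ⟨k, rfl, rfl⟩
    exact ⟨0, k, u', ⟨rfl, rfl⟩, rfl, by rw [counters_zero, zero_add]⟩

theorem isSaturated_config_levelRel {j : Fin n} {i : Fin 4} {t : ℕ} {ρ : Mon (MVar n)}
    (hρ : IsInert bar j.succ i ρ) :
    IsSaturated (LevelRel bar j) (Config bar j.succ i t ρ) := by
  intro α β h w
  cases h with
  | start =>
    refine config_add_side_iff_config_add_token hρ .start .start (fun N v => ?_) w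
    rw [Fin.val_succ, en_succ, sq]
    exact counterBalance_start
  | dec =>
    exact config_add_side_iff_config_add_side hρ .start .finish
      (fun N v => by simpa using counterBalance_dec) w
  | switch =>
    exact config_add_side_iff_config_add_side hρ .finish .finish
      (fun N v => by simpa using counterBalance_switch) w
  | restart =>
    exact config_add_side_iff_config_add_side hρ .start .start
      (fun N v => counterBalance_restart) w
  | exit =>
    exact config_add_side_iff_config_add_side hρ .finish .start
      (fun N v => by simpa using counterBalance_exit) w
  | finish =>
    exact config_add_side_iff_config_add_token hρ .start .finish
      (fun N v => counterBalance_finish) w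
  | count c => exact config_add_count_iff hρ

theorem BaseRel.hasToken {α β : Mon (MVar n)} (h : BaseRel bar α β) :
    HasToken bar 0 α ∧ HasToken bar 0 β := by
  obtain ⟨c⟩ := h
  exact ⟨IsToken.finish.hasToken_add le_rfl _, IsToken.start.hasToken_add le_rfl _⟩

theorem LevelRel.hasToken {j : Fin n} {α β : Mon (MVar n)} (h : LevelRel bar j α β) :
    HasToken bar j.succ α ∧ HasToken bar j.succ β := by
  have hS : ∀ a E, HasToken bar j.succ (side bar j a (vS bar j.castSucc) E) :=
    fun _ _ => IsToken.start.hasToken_side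
  have hF : ∀ a E, HasToken bar j.succ (side bar j a (vF bar j.castSucc) E) :=
    fun _ _ => IsToken.finish.hasToken_side
  cases h with
  | start => exact ⟨hS _ _, ⟨_, le_rfl, _, _, .start, by simp⟩⟩
  | dec => exact ⟨hS _ _, hF _ _⟩
  | switch => exact ⟨hF _ _, hF _ _⟩
  | restart => exact ⟨hS _ _, hS _ _⟩
  | exit => exact ⟨hF _ _, hS _ _⟩
  | finish => exact ⟨hS _ _, ⟨_, le_rfl, _, _, .finish, by simp⟩⟩
  | count c =>
    have hstub : ∀ E, HasToken bar j.succ (stub bar j 1 (vF bar j.castSucc) E) :=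
      fun _ => IsToken.finish.hasToken_add j.castSucc_lt_succ.le _
    exact ⟨(hstub _).add_left _, (hstub _).add_left _⟩

theorem RelUpTo.hasToken {m : Fin (n + 1)} {α β : Mon (MVar n)} (h : RelUpTo bar m α β) :
    HasToken bar m α ∧ HasToken bar m β := by
  cases h with
  | base h => exact h.hasToken.imp (·.mono (Fin.zero_le m)) (·.mono (Fin.zero_le m))
  | level j hj h => exact h.hasToken.imp (·.mono hj) (·.mono hj)

theorem RelUpTo.levelRel_or_castSucc {j : Fin n} {α β : Mon (MVar n)}
    (h : RelUpTo bar j.succ α β) : LevelRel bar j α β ∨ RelUpTo bar j.castSucc α β := by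
  cases h with
  | base h => exact Or.inr (.base h)
  | level j' hj h =>
    rcases (Fin.succ_le_succ_iff.1 hj).eq_or_lt with rfl | hlt
    · exact Or.inl h
    · exact Or.inr (.level j' (Fin.succ_le_castSucc_iff.2 hlt) h)

theorem isSaturated_config_relUpTo (m : Fin (n + 1)) {i : Fin 4} {t : ℕ} {ρ : Mon (MVar n)}
    (hρ : IsInert bar m i ρ) : IsSaturated (RelUpTo bar m) (Config bar m i t ρ) := by
  induction m using Fin.induction generalizing i t ρ with
  | zero =>
    rintro α β (h | ⟨j, hj, -⟩) w
    · exact isSaturated_config_baseRel hρ h w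
    · exact absurd hj (Fin.succ_pos j).not_ge
  | succ j ih =>
    intro α β h w
    rcases h.levelRel_or_castSucc with h | h
    · exact isSaturated_config_levelRel hρ h w
    · rw [config_succ_iff_of_hasToken hρ (h.hasToken.1.add_left w),
        config_succ_iff_of_hasToken hρ (h.hasToken.2.add_left w)]
      simp only [fun a N k => ih (t := N a) (hρ.outer a N k) h w]

theorem Config.exists_eq_add {m : Fin (n + 1)} {i : Fin 4} {t : ℕ} {ρ τ : Mon (MVar n)}
    (hτ : Config bar m i t ρ τ) : ∃ δ, τ = var (vC bar i m) + ρ + δ := by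
  induction hτ with
  | @token m i x _ k ρ => exact ⟨k • var (vB bar i m) + var x, by abel⟩
  | @phase j i a N k _ ρ _ _ _ ih =>
    obtain ⟨δ, rfl⟩ := ih
    exact ⟨var (vC bar a j.castSucc) + var (vQ bar a j.succ) +
      counters bar j.castSucc (Function.update N a 0) + k • var (vB bar i j.succ) + δ, by
        rw [outer]; abel⟩

end Configurations

section Orbit

variable {n : ℕ}

/-- The monomial `c^{a₁} b^{a₂} c̄^{b₁} b̄^{b₂}`: of `a₁ + a₂` letters `c` the number `a₂` has been
exchanged for `b`, and likewise for `c̄` and `b̄`. -/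
noncomputable def stock (a₁ a₂ b₁ b₂ : ℕ) : Mon (MVar n) :=
  a₁ • var vc + a₂ • var vb + (b₁ • var vcb + b₂ • var vbb)

/-- The monomials that arise from `ℓ c^a c̄^b` by rewriting with `𝓕` when `a + b < e(n)`. As long
as `ℓ` is present, `c` and `c̄` may be exchanged for `b_{4n} b` and `b_{4n} b̄`; replacing `ℓ` by
`c_{4n} f_n` runs the unbarred program on the counter `b_{4n}`. -/
inductive Orbit (a b : ℕ) : Set (Mon (MVar n))
  | idle {a₁ a₂ b₁ b₂} (ha : a₁ + a₂ = a) (hb : b₁ + b₂ = b) :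
      Orbit a b ((a₂ + b₂) • var (vB false 3 (Fin.last n)) + stock a₁ a₂ b₁ b₂ + var vl)
  | run {a₁ a₂ b₁ b₂ τ} (ha : a₁ + a₂ = a) (hb : b₁ + b₂ = b)
      (hτ : Config false (Fin.last n) 3 (a₂ + b₂) (stock a₁ a₂ b₁ b₂) τ) : Orbit a b τ

theorem isInert_stock (bar : Bool) (m : Fin (n + 1)) (i : Fin 4) (a₁ a₂ b₁ b₂ : ℕ) :
    IsInert bar m i (stock a₁ a₂ b₁ b₂) := by
  intro x hx
  cases x <;> first | exact hx.elim | simp [stock]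

theorem Orbit.apply_eq_zero {a b : ℕ} {τ : Mon (MVar n)} (hτ : τ ∈ Orbit a b) {x : MVar n}
    (hx : ¬ IsLocal false (Fin.last n) 3 x) (hx' : x ∉ ({vl, vc, vb, vcb, vbb} : Set (MVar n))) :
    τ x = 0 := by
  have hstock : ∀ a₁ a₂ b₁ b₂, stock a₁ a₂ b₁ b₂ x = 0 := by
    simp only [Set.mem_insert_iff, Set.mem_singleton_iff, not_or] at hx'
    simp [stock, hx']
  cases hτ with
  | idle ha hb =>
    have hB : x ≠ vB false 3 (Fin.last n) := by rintro rfl; simp [IsLocal] at hx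
    have hl : x ≠ vl := by rintro rfl; simp at hx'
    simp [hstock, hB, hl]
  | run ha hb hτ => rw [hτ.apply_of_not_isLocal hx, hstock]

theorem orbit_iff_of_hasToken {a b : ℕ} {τ : Mon (MVar n)}
    (hτ : HasToken false (Fin.last n) τ) :
    τ ∈ Orbit a b ↔ ∃ a₁ a₂ b₁ b₂, a₁ + a₂ = a ∧ b₁ + b₂ = b ∧
      τ ∈ Config false (Fin.last n) 3 (a₂ + b₂) (stock a₁ a₂ b₁ b₂) := by
  refine ⟨fun h => ?_, fun ⟨_, _, _, _, ha, hb, h⟩ => .run ha hb h⟩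
  cases h with
  | idle ha hb =>
    obtain ⟨l, -, x, u, hx, hne⟩ := hτ
    refine absurd ?_ hne
    cases hx <;> simp [stock]
  | run ha hb h => exact ⟨_, _, _, _, ha, hb, h⟩

theorem orbit_add_vl_iff {a b : ℕ} {w : Mon (MVar n)} :
    w + var vl ∈ Orbit a b ↔ ∃ a₁ a₂ b₁ b₂, a₁ + a₂ = a ∧ b₁ + b₂ = b ∧
      w = (a₂ + b₂) • var (vB false 3 (Fin.last n)) + stock a₁ a₂ b₁ b₂ := by
  constructor
  · intro h
    generalize hτ : w + var vl = τ at h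
    cases h with
    | idle ha hb => exact ⟨_, _, _, _, ha, hb, add_right_cancel hτ⟩
    | run ha hb h =>
      have hvl := h.apply_of_not_isLocal (x := vl) id
      simp [← hτ, stock] at hvl
  · rintro ⟨a₁, a₂, b₁, b₂, ha, hb, rfl⟩
    exact .idle ha hb

theorem orbit_exchange_iff {a b : ℕ} (w : Mon (MVar n)) :
    w + (var (vB false 3 (Fin.last n)) + var vb + var vl) ∈ Orbit a b ↔
      w + (var vc + var vl) ∈ Orbit a b := by
  rw [← add_assoc w, ← add_assoc w, ← add_assoc w, orbit_add_vl_iff, orbit_add_vl_iff]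
  constructor
  · rintro ⟨a₁, a₂, b₁, b₂, ha, hb, hw⟩
    have hpos : w vb + 1 = a₂ := by simpa [stock] using DFunLike.congr_fun hw vb
    subst hpos
    refine ⟨a₁ + 1, w vb, b₁, b₂, by omega, hb, ?_⟩
    apply add_right_cancel (b := var (vB false 3 (Fin.last n)) + var vb)
    rw [add_right_comm, ← add_assoc w, hw]
    simp only [stock, add_smul, one_smul]
    abel
  · rintro ⟨a₁, a₂, b₁, b₂, ha, hb, hw⟩
    have hpos : w vc + 1 = a₁ := by simpa [stock] using DFunLike.congr_fun hw vc
    subst hpos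
    refine ⟨w vc, a₂ + 1, b₁, b₂, by omega, hb, ?_⟩
    apply add_right_cancel (b := var vc)
    rw [add_right_comm, add_right_comm w, hw]
    simp only [stock, add_smul, one_smul]
    abel

theorem orbit_exchangeBar_iff {a b : ℕ} (w : Mon (MVar n)) :
    w + (var (vB false 3 (Fin.last n)) + var vbb + var vl) ∈ Orbit a b ↔
      w + (var vcb + var vl) ∈ Orbit a b := by
  rw [← add_assoc w, ← add_assoc w, ← add_assoc w, orbit_add_vl_iff, orbit_add_vl_iff]
  constructor
  · rintro ⟨a₁, a₂, b₁, b₂, ha, hb, hw⟩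
    have hpos : w vbb + 1 = b₂ := by simpa [stock] using DFunLike.congr_fun hw vbb
    subst hpos
    refine ⟨a₁, a₂, b₁ + 1, w vbb, ha, by omega, ?_⟩
    apply add_right_cancel (b := var (vB false 3 (Fin.last n)) + var vbb)
    rw [add_right_comm, ← add_assoc w, hw]
    simp only [stock, add_smul, one_smul]
    abel
  · rintro ⟨a₁, a₂, b₁, b₂, ha, hb, hw⟩
    have hpos : w vcb + 1 = b₁ := by simpa [stock] using DFunLike.congr_fun hw vcb
    subst hpos
    refine ⟨a₁, a₂, w vcb, b₂ + 1, ha, by omega, ?_⟩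
    apply add_right_cancel (b := var vcb)
    rw [add_right_comm, add_right_comm w, hw]
    simp only [stock, add_smul, one_smul]
    abel

theorem orbit_finish_iff {a b : ℕ} (w : Mon (MVar n)) :
    w + (var (vC false 3 (Fin.last n)) + var (vF false (Fin.last n))) ∈ Orbit a b ↔
      w + var vl ∈ Orbit a b := by
  have hF : IsToken false (Fin.last n) (vF false (Fin.last n)) 0 := .finish
  rw [← add_assoc w, orbit_iff_of_hasToken (hF.hasToken_add le_rfl _), orbit_add_vl_iff]
  refine exists₄_congr fun a₁ a₂ b₁ b₂ => and_congr_right fun _ => and_congr_right fun _ => ?_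
  rw [config_add_token_iff (isInert_stock _ _ _ _ _ _ _) hF]
  simp only [add_zero, exists_eq_left']
  rw [add_assoc, add_comm w, add_right_inj]

-- The counter `b_{4n}` never exceeds `a + b < e(n)`, so the program cannot run back to `s_n`.
theorem Orbit.apply_vS_last {a b : ℕ} (hab : a + b < en n) {τ : Mon (MVar n)}
    (hτ : τ ∈ Orbit a b) : τ (vS false (Fin.last n)) = 0 := by
  by_contra hne
  have hS : IsToken false (Fin.last n) (vS false (Fin.last n)) (en n) := .start
  obtain ⟨w, rfl⟩ : ∃ w, τ = w + var (vS false (Fin.last n)) :=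
    ⟨_, (tsub_add_cancel_of_le (Finsupp.single_le_iff.2 (Nat.one_le_iff_ne_zero.2 hne))).symm⟩
  obtain ⟨a₁, a₂, b₁, b₂, ha, hb, hτ⟩ := (orbit_iff_of_hasToken (hS.hasToken_add le_rfl w)).1 hτ
  obtain ⟨k, hk, -⟩ := (config_add_token_iff (isInert_stock _ _ _ _ _ _ _) hS).1 hτ
  omega

theorem isSaturated_orbit {a b : ℕ} (hab : a + b < en n) :
    IsSaturated FFRel (Orbit a b : Set (Mon (MVar n))) := by
  have hnot : ∀ {α : Mon (MVar n)} {x}, α x ≠ 0 → ¬ IsLocal false (Fin.last n) 3 x →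
      x ∉ ({vl, vc, vb, vcb, vbb} : Set (MVar n)) → ∀ w, w + α ∉ Orbit a b :=
    fun hα hx hx' w hτ => hα (Nat.eq_zero_of_add_eq_zero_left (Orbit.apply_eq_zero hτ hx hx'))
  have hnotS : ∀ {α : Mon (MVar n)}, α (vS false (Fin.last n)) ≠ 0 → ∀ w, w + α ∉ Orbit a b :=
    fun hα w hτ => hα (Nat.eq_zero_of_add_eq_zero_left (Orbit.apply_vS_last hab hτ))
  rintro α β (⟨_ | _, h⟩ | h) w
  · rw [orbit_iff_of_hasToken (h.hasToken.1.add_left w),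
      orbit_iff_of_hasToken (h.hasToken.2.add_left w)]
    exact exists₄_congr fun a₁ a₂ b₁ b₂ => and_congr_right fun _ => and_congr_right fun _ =>
      isSaturated_config_relUpTo _ (isInert_stock _ _ _ _ _ _ _) h w
  · have hbarred : ∀ {α : Mon (MVar n)}, HasToken true (Fin.last n) α → w + α ∉ Orbit a b := by
      rintro α ⟨l, -, x, u, hx, hα⟩
      cases hx <;> exact hnot hα (by simp [IsLocal]) (by simp) w
    exact iff_of_false (hbarred h.hasToken.1) (hbarred h.hasToken.2)
  · cases h with
    | exchange => exact orbit_exchange_iff w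
    | exchangeBar => exact orbit_exchangeBar_iff w
    | finish => exact orbit_finish_iff w
    | link =>
      exact iff_of_false (hnot (x := vF true (Fin.last n)) (by simp) (by simp [IsLocal])
        (by simp) w) (hnotS (by simp) w)
    | absorb | absorbBar => exact iff_of_false (hnotS (by simp) w) (hnotS (by simp) w)
    | start =>
      exact iff_of_false (hnot (x := vS true (Fin.last n)) (by simp) (by simp [IsLocal])
        (by simp) w) (hnot (x := vs) (by simp) id (by simp) w)

variable {μ : MonOrd (MVar n)}

theorem le_stock (hb : μ.le (var vc) (var vb)) (hbb : μ.le (var vcb) (var vbb))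
    (a₁ a₂ b₁ b₂ : ℕ) :
    μ.le ((a₁ + a₂) • var vc + (b₁ + b₂) • var vcb) (stock a₁ a₂ b₁ b₂) := by
  rw [add_smul, add_smul]
  exact μ.add_le_add' (μ.add_le_add' (μ.le_refl _) (μ.nsmul_le_nsmul hb _))
    (μ.add_le_add' (μ.le_refl _) (μ.nsmul_le_nsmul hbb _))

theorem Orbit.le (hb : μ.le (var vc) (var vb)) (hbb : μ.le (var vcb) (var vbb))
    (hl : μ.le (var vl) (var (vC false 3 (Fin.last n)))) {a b : ℕ} {τ : Mon (MVar n)}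
    (hτ : τ ∈ Orbit a b) : μ.le (var vl + (a • var vc + b • var vcb)) τ := by
  cases hτ with
  | @idle a₁ a₂ b₁ b₂ ha hb' =>
    subst ha hb'
    rw [add_assoc, add_comm (_ • _) (_ + _), add_comm _ (var vl)]
    refine μ.le_trans _ _ _ (μ.add_le_add' (μ.le_refl _) (le_stock hb hbb a₁ a₂ b₁ b₂)) ?_
    exact μ.le_self_add _ _
  | run ha hb' hτ =>
    subst ha hb'
    obtain ⟨δ, rfl⟩ := hτ.exists_eq_add
    exact μ.le_trans _ _ _ (μ.add_le_add' hl (le_stock hb hbb _ _ _ _)) (μ.le_self_add _ _)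

theorem mem_orbit (a b : ℕ) :
    var vl + (a • var vc + b • var vcb) ∈ (Orbit a b : Set (Mon (MVar n))) := by
  rw [add_comm]
  exact orbit_add_vl_iff.2 ⟨a, 0, b, 0, rfl, rfl, by simp [stock]⟩

theorem isSaturated_singleton_nsmul_add_nsmul (a b : ℕ) :
    IsSaturated FFRel ({a • var vc + b • var vcb} : Set (Mon (MVar n))) := by
  have hnot : ∀ {α : Mon (MVar n)} (x : MVar n), α x ≠ 0 → x ≠ vc → x ≠ vcb →
      ∀ w, w + α ∉ ({a • var vc + b • var vcb} : Set (Mon (MVar n))) := by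
    intro α x hα hc hcb w hw
    have hx := DFunLike.congr_fun (Set.mem_singleton_iff.1 hw) x
    simp [hα, hc, hcb] at hx
  refine .of_notMem ?_
  rintro α β (⟨bar, h⟩ | h) w
  · have htoken : ∀ {α : Mon (MVar n)}, HasToken bar (Fin.last n) α →
        w + α ∉ ({a • var vc + b • var vcb} : Set (Mon (MVar n))) := by
      rintro α ⟨l, -, x, u, hx, hα⟩
      cases hx <;> exact hnot _ hα nofun nofun w
    exact ⟨htoken h.hasToken.1, htoken h.hasToken.2⟩
  · cases h with
    | exchange | exchangeBar =>
      exact ⟨hnot vl (by simp) nofun nofun w, hnot vl (by simp) nofun nofun w⟩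
    | finish =>
      exact ⟨hnot (vF false (Fin.last n)) (by simp) nofun nofun w,
        hnot vl (by simp) nofun nofun w⟩
    | link =>
      exact ⟨hnot (vF true (Fin.last n)) (by simp) nofun nofun w,
        hnot (vS false (Fin.last n)) (by simp) nofun nofun w⟩
    | absorb | absorbBar =>
      exact ⟨hnot (vS false (Fin.last n)) (by simp) nofun nofun w,
        hnot (vS false (Fin.last n)) (by simp) nofun nofun w⟩
    | start =>
      exact ⟨hnot (vS true (Fin.last n)) (by simp) nofun nofun w,
        hnot vs (by simp) nofun nofun w⟩

end Orbit

section WeightedOrder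

variable {n : ℕ} {w : MVar n → ℝ}

theorem wdeg_eq_linearCombination (t : Mon (MVar n)) :
    wdeg w t = Finsupp.linearCombination ℕ w t := by
  simp only [wdeg, Finsupp.linearCombination_apply, nsmul_eq_mul]

theorem wdeg_add (t u : Mon (MVar n)) : wdeg w (t + u) = wdeg w t + wdeg w u := by
  simp only [wdeg_eq_linearCombination, map_add]

theorem wLe_var {x y : MVar n} (h : w x < w y) : wLe w (var x) (var y) :=
  Or.inr (by simpa [wdeg] using h)

/-- The weighted order `≼_w` as a monomial order; it is total because linear independence makes
`wdeg w` injective. -/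
def weightedOrd (w : MVar n → ℝ) (hpos : ∀ x, 0 < w x) (hind : LinearIndependent ℚ w) :
    MonOrd (MVar n) where
  le := wLe w
  le_refl _ := Or.inl rfl
  le_trans := by
    rintro t u v (rfl | htu) (rfl | huv)
    exacts [Or.inl rfl, Or.inr huv, Or.inr htu, Or.inr (htu.trans huv)]
  le_antisymm := by
    rintro t u (h | htu) (h' | hut)
    exacts [h, h, h'.symm, absurd htu hut.asymm]
  le_total t u := by
    have hinj : Function.Injective (Finsupp.linearCombination ℕ w) :=
      hind.restrict_scalars' ℕ
    simp only [wLe, wdeg_eq_linearCombination]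
    rcases lt_trichotomy (Finsupp.linearCombination ℕ w t) (Finsupp.linearCombination ℕ w u)
      with h | h | h
    exacts [Or.inl (Or.inr h), Or.inl (Or.inl (hinj h)), Or.inr (Or.inr h)]
  zero_le t := by
    rcases eq_or_ne t 0 with rfl | ht
    · exact Or.inl rfl
    · refine Or.inr ?_
      rw [wdeg, wdeg, Finsupp.sum_zero_index]
      exact Finsupp.sum_pos (fun x hx => mul_pos
        (Nat.cast_pos.2 (Nat.pos_of_ne_zero (Finsupp.mem_support_iff.1 hx))) (hpos x)) ht
  add_le_add := by
    rintro t u v (rfl | h)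
    · exact Or.inl rfl
    · exact Or.inr (by rw [wdeg_add, wdeg_add]; gcongr)

end WeightedOrder

section HeadMonomials

variable {n : ℕ} {μ : MonOrd (MVar n)}

theorem exists_mem_span_isHT_of_mem_Cmon (hs : μ.le (var vs) (var vl)) {t : Mon (MVar n)}
    (ht : t ∈ Cmon n) : ∃ p ∈ Ideal.span (FF n), IsHT μ.le p t := by
  obtain ⟨m₁, m₂, hm, rfl⟩ := ht
  refine ⟨_, mul_pow_mul_pow_add_mem hm, ?_⟩
  have hmonomial : (X vl * X vcb ^ m₁ * X vc ^ m₂ + X vs : MPoly n) =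
      monomial (var vl + Finsupp.single vcb m₁ + Finsupp.single vc m₂) 1 + monomial (var vs) 1 := by
    rw [X_pow_eq_monomial, X_pow_eq_monomial, X_eq_monomial_var, monomial_mul, monomial_mul,
      mul_one, mul_one, X_eq_monomial_var]
  rw [hmonomial]
  refine isHT_monomial_add_monomial ⟨?_, fun h => ?_⟩
  · rw [add_assoc]
    exact μ.le_trans _ _ _ hs (μ.le_self_add _ _)
  · simpa using DFunLike.congr_fun h vl

theorem not_isHT_of_mem_Dmon (hb : μ.le (var vc) (var vb)) (hbb : μ.le (var vcb) (var vbb))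
    (hl : μ.le (var vl) (var (vC false 3 (Fin.last n)))) {p : MPoly n}
    (hp : p ∈ Ideal.span (FF n)) {t : Mon (MVar n)} (ht : t ∈ Dmon n) : ¬ IsHT μ.le p t := by
  obtain ⟨j, m₁, m₂, hj, hm, rfl⟩ := ht
  have hpow : Finsupp.single vcb m₁ + Finsupp.single vc m₂ =
      (m₂ • var vc + m₁ • var vcb : Mon (MVar n)) := by
    rw [Finsupp.smul_single_one, Finsupp.smul_single_one, add_comm]
  rw [add_assoc, hpow]
  obtain rfl | rfl := Nat.le_one_iff_eq_zero_or_eq_one.1 hj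
  · rw [Finsupp.single_zero, zero_add]
    refine (isSaturated_singleton_nsmul_add_nsmul m₂ m₁).not_isHT
      (fun _ => exists_ffRel_of_mem_FF) rfl ?_ hp
    rintro _ rfl
    exact μ.le_refl _
  · exact (isSaturated_orbit (by omega)).not_isHT (fun _ => exists_ffRel_of_mem_FF)
      (mem_orbit m₂ m₁) (fun _ => Orbit.le hb hbb hl) hp

theorem mem_Dmon_of_lt_of_mem_Cmon {t u : Mon (MVar n)} (ht : t ∈ Cmon n) (hut : u < t) :
    u ∈ Dmon n := by
  obtain ⟨m₁, m₂, hm, rfl⟩ := ht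
  have hle := Finsupp.le_def.1 hut.le
  have hu : u = Finsupp.single vl (u vl) + Finsupp.single vcb (u vcb) +
      Finsupp.single vc (u vc) := by
    ext x
    by_cases hx : x = vl ∨ x = vcb ∨ x = vc
    · obtain rfl | rfl | rfl := hx <;> simp
    · push Not at hx
      simpa [hx.1.symm, hx.2.1.symm, hx.2.2.symm] using hle x
  have hvl : u vl ≤ 1 := by simpa using hle vl
  have hvcb : u vcb ≤ m₁ := by simpa using hle vcb
  have hvc : u vc ≤ m₂ := by simpa using hle vc
  refine ⟨_, _, _, hvl, ?_, hu⟩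
  by_contra! hlt
  obtain ⟨h₀, h₁, h₂⟩ : u vl = 1 ∧ u vcb = m₁ ∧ u vc = m₂ := by omega
  rw [h₀, h₁, h₂] at hu
  exact hut.ne hu

theorem IsGB.exists_isHT_of_mem_Cmon (hs : μ.le (var vs) (var vl))
    (hb : μ.le (var vc) (var vb)) (hbb : μ.le (var vcb) (var vbb))
    (hl : μ.le (var vl) (var (vC false 3 (Fin.last n)))) {G : Finset (MPoly n)}
    (hG : IsGB μ.le G (Ideal.span (FF n))) {t : Mon (MVar n)} (ht : t ∈ Cmon n) :
    ∃ g ∈ G, IsHT μ.le g t := by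
  obtain ⟨p, hp, hpt⟩ := exists_mem_span_isHT_of_mem_Cmon hs ht
  obtain ⟨g, hg, u, hut, hgu⟩ := hG.exists_isHT_le hp hpt
  obtain rfl | hlt := hut.eq_or_lt
  · exact ⟨g, hg, hgu⟩
  · exact absurd hgu
      (not_isHT_of_mem_Dmon hb hbb hl (hG.1 hg) (mem_Dmon_of_lt_of_mem_Cmon ht hlt))

theorem en_lt_card_filter_of_exists_isHT {G : Finset (MPoly n)}
    (hG : ∀ t ∈ Cmon n, ∃ g ∈ G, IsHT μ.le g t) :
    en n < (G.filter fun p => en n ≤ p.totalDegree).card := by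
  let head (m : ℕ × ℕ) : Mon (MVar n) :=
    Finsupp.single vl 1 + Finsupp.single vcb m.1 + Finsupp.single vc m.2
  choose! g hg hhead using fun m (hm : m ∈ Finset.HasAntidiagonal.antidiagonal (en n)) =>
    hG (head m) ⟨m.1, m.2, Finset.HasAntidiagonal.mem_antidiagonal.1 hm, rfl⟩
  rw [← Nat.succ_le_iff, Nat.succ_eq_add_one, ← Finset.Nat.card_antidiagonal]
  refine Finset.card_le_card_of_injOn g (fun m hm => ?_) fun m hm m' hm' heq => ?_
  · refine Finset.mem_filter.2 ⟨hg m hm, ?_⟩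
    have hdeg : (head m).sum (fun _ k => k) = 1 + m.1 + m.2 := by
      simp [head, Finsupp.sum_add_index']
    have hle := le_totalDegree (hhead m hm).1
    have hm := Finset.HasAntidiagonal.mem_antidiagonal.1 hm
    omega
  · have h : head m = head m' := (hhead m hm).unique (heq ▸ hhead m' hm')
    exact Prod.ext (by simpa [head] using DFunLike.congr_fun h vcb)
      (by simpa [head] using DFunLike.congr_fun h vc)

theorem stmt19_general (hs : μ.le (var vs) (var vl)) (hb : μ.le (var vc) (var vb))
    (hbb : μ.le (var vcb) (var vbb)) (hl : μ.le (var vl) (var (vC false 3 (Fin.last n))))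
    {G : Finset (MPoly n)} (hG : IsGB μ.le G (Ideal.span (FF n))) :
    en n ≤ G.card ∧ en n ≤ (G.filter fun p => en n ≤ p.totalDegree).card := by
  have hlt := en_lt_card_filter_of_exists_isHT fun _ => hG.exists_isHT_of_mem_Cmon hs hb hbb hl
  exact ⟨hlt.le.trans (Finset.card_filter_le _ _), hlt.le⟩

end HeadMonomials

open MVar in
/-- Let `w` be an injective weight map with positive, `ℚ`-linearly
independent values, `w(s) < w(c) < w(c̄) < w(ℓ) < w(b) < w(b̄)`, and `w(y) < w(x)` for every
`y ∈ {s,c,c̄,ℓ,b,b̄}` and variable `x` outside this set. Then every reduced Gröbner basis `G`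
of `⟨𝓕⟩` with respect to the weighted order `≼_w` satisfies `|G| ≥ 2^(2^n)` and
`|{p ∈ G : deg p ≥ 2^(2^n)}| ≥ 2^(2^n)`. -/
theorem stmt19 (n : ℕ) (w : MVar n → ℝ)
    (hinj : Function.Injective w)
    (hpos : ∀ x, 0 < w x)
    (hind : LinearIndependent ℚ w)
    (h1 : w vs < w vc) (h2 : w vc < w vcb) (h3 : w vcb < w vl)
    (h4 : w vl < w vb) (h5 : w vb < w vbb)
    (hsmall : ∀ x : MVar n, x ∉ ({vs, vc, vcb, vl, vb, vbb} : Set (MVar n)) →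
      ∀ y ∈ ({vs, vc, vcb, vl, vb, vbb} : Set (MVar n)), w y < w x)
    (G : Finset (MPoly n))
    (hG : IsReducedGB (wLe w) G (Ideal.span (FF n))) :
    en n ≤ G.card ∧ en n ≤ (G.filter fun p => en n ≤ p.totalDegree).card :=
  stmt19_general (μ := weightedOrd w hpos hind) (wLe_var (h1.trans (h2.trans h3)))
    (wLe_var (h2.trans (h3.trans h4))) (wLe_var (h3.trans (h4.trans h5)))
    (wLe_var (hsmall _ (by simp) _ (by simp))) hG.1
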